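/- Let Ω ⊆ ℂ be open, let f : ℂ → ℂ be analytic on Ω, and let z1, z2 ∈ Ω with z1 ≠ z2. Let z ∈ Ω and suppose there exists r > |(z−z1)(z−z2)| such that |(w−z1)(w−z2)| ≥ r for every w ∈ ℂ \ Ω. Define A_n = −z1·a_n(z1,z2) − z2·a_n(z2,z1) and B_n = a_n(z1,z2) + a_n(z2,z1). Then f(z) = Σ_{n=0}^{∞} (A_n + B_n·z)·((z−z1)(z−z2))^n, i.e., the partial sums Σ_{n=0}^{N−1} (A_n + B_n·z)·((z−z1)(z−z2))^n converge to f(z) as N → ∞. -/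

import Mathlib

/-- The two-point Taylor coefficient `a_n(z1, z2)` of `f` at the points `z1, z2`. -/
noncomputable def twoPointCoeff (f : ℂ → ℂ) (z1 z2 : ℂ) (n : ℕ) : ℂ :=
  if n = 0 then f z2 / (z2 - z1)
  else ∑ k ∈ Finset.range (n + 1),
    ((Nat.factorial (n + k - 1) : ℂ) / ((Nat.factorial k : ℂ) * (Nat.factorial (n - k) : ℂ))) *
      (((-1 : ℂ) ^ (n + 1) * (n : ℂ) * iteratedDeriv (n - k) f z2
          + (-1 : ℂ) ^ k * (k : ℂ) * iteratedDeriv (n - k) f z1)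
        / ((Nat.factorial n : ℂ) * (z1 - z2) ^ (n + k + 1)))

open Filter Finset
open scoped Nat Topology

/-!
Let `Q w = (w - z1) * (w - z2)`. Splitting a function of `v = w - (z1 + z2) / 2` into its even and
odd parts, and noting that an even function of `v` is a function of `v ^ 2`, hence of `Q w`, gives
`f w = A (Q w) + w * B (Q w)` with `A` and `B` holomorphic on the disc `|q| < r`. The expansion of
`f` is then obtained from the Taylor series of `A` and `B` at `0`.

To identify the coefficients, note that `(z2 - z1) * a_n(z1, z2)` is the sum of the residues of
`(w - z1) * f w / Q w ^ (n + 1)` at `z1` and `z2`. The numerator is again of the form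
`α (Q w) * w + β (Q w)`. Since `w` is `Q' w / 2` plus a constant, and functions invariant under
`w ↦ z1 + z2 - w` have residue sum zero, only the residues of `α (Q w) * Q' w / Q w ^ (n + 1)`
count; by the change of variable `q = Q w` each of them is the `n`-th Taylor coefficient of `α`.
-/

section IteratedDeriv

variable {𝕜 : Type*} [NontriviallyNormedField 𝕜] {f : 𝕜 → 𝕜} {x y : 𝕜} {n : ℕ}

lemma iteratedDeriv_sub_mul_self (hf : ContDiffAt 𝕜 (n + 1 : ℕ) f x) :
    iteratedDeriv (n + 1) (fun w ↦ (w - x) * f w) x = (n + 1) * iteratedDeriv n f x := by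
  have hderiv : ∀ i, iteratedDeriv (i + 1) (fun w ↦ w - x) x = if i = 0 then 1 else 0 := by
    intro i
    simp [iteratedDeriv_comp_sub_const (i + 1) (fun w : 𝕜 ↦ w), iteratedDeriv_fun_id_zero]
  rw [iteratedDeriv_fun_mul (by fun_prop) hf, sum_range_succ']
  simp only [hderiv]
  simp

lemma iteratedDeriv_inv_sub_pow (q k : ℕ) (x y : 𝕜) :
    iteratedDeriv k (fun w ↦ ((w - y) ^ q)⁻¹) x =
      (-1) ^ k * q.ascFactorial k * ((x - y) ^ (q + k))⁻¹ := by
  have hprod : ∏ i ∈ range k, (((-q : ℤ) : 𝕜) - i) = (-1) ^ k * q.ascFactorial k := by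
    rw [Nat.ascFactorial_eq_prod_range, Nat.cast_prod, ← card_range k, ← prod_const,
      card_range, ← prod_mul_distrib]
    exact prod_congr rfl fun i _ ↦ by push_cast; ring
  have hzpow : ∀ (u : 𝕜) (m : ℕ), (u ^ m)⁻¹ = u ^ (-m : ℤ) := by simp
  have hexp : (-q - k : ℤ) = -(q + k : ℕ) := by push_cast; ring
  simp only [hzpow, iteratedDeriv_comp_sub_const k (fun w : 𝕜 ↦ w ^ (-q : ℤ)),
    iteratedDeriv_eq_iterate, iter_deriv_zpow, hprod, hexp]

lemma iteratedDeriv_inv_sub_pow_mul (hxy : x ≠ y) (hf : ContDiffAt 𝕜 n f x) (q : ℕ) :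
    iteratedDeriv n (fun w ↦ ((w - y) ^ q)⁻¹ * f w) x =
      ∑ k ∈ range (n + 1), n.choose k * ((-1) ^ k * q.ascFactorial k * ((x - y) ^ (q + k))⁻¹) *
        iteratedDeriv (n - k) f x := by
  have hinv : ContDiffAt 𝕜 n (fun w ↦ ((w - y) ^ q)⁻¹) x :=
    ContDiffAt.inv (by fun_prop) (pow_ne_zero q (sub_ne_zero.2 hxy))
  simp_rw [iteratedDeriv_fun_mul hinv hf, iteratedDeriv_inv_sub_pow]

lemma choose_mul_ascFactorial_div_factorial {K : Type*} [Field K] [CharZero K] {m k : ℕ}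
    (hk : k ≤ m) (q : ℕ) :
    (m.choose k * (q + 1).ascFactorial k / m ! : K) = (q + k)! / (k ! * (m - k)! * q !) := by
  rw [Nat.cast_choose K hk, ← Nat.factorial_mul_ascFactorial q k]
  have hne : ∀ j : ℕ, (j ! : K) ≠ 0 := fun j ↦ Nat.cast_ne_zero.2 j.factorial_ne_zero
  have hm := hne m
  have hq := hne q
  push_cast
  field_simp

lemma iteratedDeriv_inv_sub_pow_succ_mul_div_factorial [CharZero 𝕜] (hxy : x ≠ y)
    (hf : ContDiffAt 𝕜 n f x) (q : ℕ) :
    iteratedDeriv n (fun w ↦ ((w - y) ^ (q + 1))⁻¹ * f w) x / n ! =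
      ∑ k ∈ range (n + 1), (q + k)! / (k ! * (n - k)! * q !) *
        ((-1) ^ k * iteratedDeriv (n - k) f x / (x - y) ^ (q + 1 + k)) := by
  rw [iteratedDeriv_inv_sub_pow_mul hxy hf, sum_div]
  refine sum_congr rfl fun k hk ↦ ?_
  rw [← choose_mul_ascFactorial_div_factorial (Nat.lt_succ_iff.1 (mem_range.1 hk))]
  ring

end IteratedDeriv

section PoleResidue

variable {𝕜 : Type*} [NontriviallyNormedField 𝕜] {f g h : 𝕜 → 𝕜} {x y : 𝕜} {n : ℕ}

/-- The residue at `x` of `g w / ((w - x) * (w - y)) ^ (n + 1)`, for `g` analytic at `x ≠ y`: since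
the pole has order at most `n + 1`, it is a Taylor coefficient of `g w / (w - y) ^ (n + 1)`. -/
noncomputable def poleResidue (g : 𝕜 → 𝕜) (x y : 𝕜) (n : ℕ) : 𝕜 :=
  iteratedDeriv n (fun w ↦ g w / (w - y) ^ (n + 1)) x / n !

/-- The sum of the residues of `g w / ((w - x) * (w - y)) ^ (n + 1)` at its two poles. -/
noncomputable def residueSum (g : 𝕜 → 𝕜) (x y : 𝕜) (n : ℕ) : 𝕜 :=
  poleResidue g x y n + poleResidue g y x n

lemma contDiffAt_div_sub_pow (hxy : x ≠ y) (hg : ContDiffAt 𝕜 n g x) (q : ℕ) :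
    ContDiffAt 𝕜 n (fun w ↦ g w / (w - y) ^ q) x :=
  hg.div (by fun_prop) (pow_ne_zero q (sub_ne_zero.2 hxy))

lemma poleResidue_add (hxy : x ≠ y) (hg : ContDiffAt 𝕜 n g x) (hh : ContDiffAt 𝕜 n h x) :
    poleResidue (fun w ↦ g w + h w) x y n = poleResidue g x y n + poleResidue h x y n := by
  simp only [poleResidue, add_div]
  rw [iteratedDeriv_fun_add (contDiffAt_div_sub_pow hxy hg _) (contDiffAt_div_sub_pow hxy hh _),
    add_div]

lemma poleResidue_const_mul (c : 𝕜) (g : 𝕜 → 𝕜) (x y : 𝕜) (n : ℕ) :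
    poleResidue (fun w ↦ c * g w) x y n = c * poleResidue g x y n := by
  simp only [poleResidue, mul_div_assoc, iteratedDeriv_const_mul_field]

lemma residueSum_add (hxy : x ≠ y) (hgx : ContDiffAt 𝕜 n g x) (hgy : ContDiffAt 𝕜 n g y)
    (hhx : ContDiffAt 𝕜 n h x) (hhy : ContDiffAt 𝕜 n h y) :
    residueSum (fun w ↦ g w + h w) x y n = residueSum g x y n + residueSum h x y n := by
  rw [residueSum, poleResidue_add hxy hgx hhx, poleResidue_add hxy.symm hgy hhy, residueSum,
    residueSum, add_add_add_comm]

lemma poleResidue_comp_add_sub (g : 𝕜 → 𝕜) (x y : 𝕜) (n : ℕ) :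
    poleResidue (fun w ↦ g (x + y - w)) x y n = -poleResidue g y x n := by
  have hreflect : (fun w ↦ g (x + y - w) / (w - y) ^ (n + 1)) =
      fun w ↦ (-1) ^ (n + 1) * (fun v ↦ g v / (v - x) ^ (n + 1)) (x + y - w) := by
    funext w
    rw [show w - y = -1 * (x + y - w - x) by ring, mul_pow, ← div_div, div_right_comm,
      div_eq_mul_inv _ ((-1 : 𝕜) ^ _), ← inv_pow, inv_neg_one, mul_comm]
  have hcomp := congr_fun (iteratedDeriv_comp_const_sub n (fun v ↦ g v / (v - x) ^ (n + 1))
    (x + y)) x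
  rw [poleResidue, poleResidue, hreflect, iteratedDeriv_const_mul_field, hcomp, smul_eq_mul,
    ← mul_assoc, ← pow_add, add_sub_cancel_left, Odd.neg_one_pow ⟨n, by ring⟩, neg_one_mul,
    neg_div]

lemma residueSum_eq_zero_of_symmetric (hg : ∀ w, g (x + y - w) = g w) :
    residueSum g x y n = 0 := by
  have hreflect := poleResidue_comp_add_sub g x y n
  simp only [hg] at hreflect
  rw [residueSum, hreflect, neg_add_cancel]

lemma residueSum_mul_self_add_of_symmetric [CharZero 𝕜] (hxy : x ≠ y)
    (hgx : ContDiffAt 𝕜 n g x) (hgy : ContDiffAt 𝕜 n g y)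
    (hhx : ContDiffAt 𝕜 n h x) (hhy : ContDiffAt 𝕜 n h y)
    (hg : ∀ w, g (x + y - w) = g w) (hh : ∀ w, h (x + y - w) = h w) :
    residueSum (fun w ↦ g w * w + h w) x y n =
      2⁻¹ * residueSum (fun w ↦ g w * (w - x + (w - y))) x y n := by
  have hsplit : (fun w ↦ g w * w + h w) = fun w ↦
      2⁻¹ * (g w * (w - x + (w - y))) + ((x + y) / 2 * g w + h w) := by
    funext w
    ring
  have hsymm : residueSum (fun w ↦ (x + y) / 2 * g w + h w) x y n = 0 :=
    residueSum_eq_zero_of_symmetric fun w ↦ by rw [hg, hh]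
  rw [hsplit, residueSum_add hxy (by fun_prop) (by fun_prop) (by fun_prop) (by fun_prop), hsymm,
    add_zero, residueSum, poleResidue_const_mul, poleResidue_const_mul, ← mul_add, residueSum]

lemma poleResidue_sub_mul_self [CharZero 𝕜] (hxy : x ≠ y) (hf : ContDiffAt 𝕜 (n + 1 : ℕ) f x) :
    poleResidue (fun w ↦ (w - x) * f w) x y (n + 1) =
      iteratedDeriv n (fun w ↦ ((w - y) ^ (n + 2))⁻¹ * f w) x / n ! := by
  simp only [poleResidue, mul_div_assoc]
  rw [iteratedDeriv_sub_mul_self (contDiffAt_div_sub_pow hxy hf _), Nat.factorial_succ]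
  push_cast
  rw [mul_div_mul_left _ _ n.cast_add_one_ne_zero]
  simp only [div_eq_inv_mul]

lemma poleResidue_sub_mul_other (hxy : x ≠ y) (f : 𝕜 → 𝕜) (n : ℕ) :
    poleResidue (fun w ↦ (w - y) * f w) x y n =
      iteratedDeriv n (fun w ↦ ((w - y) ^ n)⁻¹ * f w) x / n ! := by
  have hcancel : (fun w ↦ (w - y) * f w / (w - y) ^ (n + 1)) =ᶠ[𝓝 x]
      fun w ↦ ((w - y) ^ n)⁻¹ * f w := by
    filter_upwards [eventually_ne_nhds hxy] with w hw
    rw [pow_succ', mul_div_mul_left _ _ (sub_ne_zero.2 hw), div_eq_inv_mul]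
  rw [poleResidue, hcancel.iteratedDeriv_eq]

end PoleResidue

section ChangeOfVariable

variable {𝕜 : Type*} [NontriviallyNormedField 𝕜] {α β : 𝕜 → 𝕜} {x y : 𝕜}

lemma analyticAt_comp_quadratic (hα : AnalyticAt 𝕜 α 0) {u : 𝕜} (hu : (u - x) * (u - y) = 0) :
    AnalyticAt 𝕜 (fun w ↦ α ((w - x) * (w - y))) u :=
  AnalyticAt.fun_comp (by rwa [hu]) (by fun_prop)

lemma deriv_comp_quadratic_div_sub_pow {w : 𝕜} (hw : w ≠ y)
    (hα : DifferentiableAt 𝕜 α ((w - x) * (w - y))) (n : ℕ) :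
    deriv (fun w ↦ α ((w - x) * (w - y)) / (w - y) ^ (n + 1)) w =
      deriv α ((w - x) * (w - y)) * (w - x + (w - y)) / (w - y) ^ (n + 1) -
        (n + 1) * (α ((w - x) * (w - y)) / (w - y) ^ (n + 2)) := by
  have hwy : w - y ≠ 0 := sub_ne_zero.2 hw
  have hquad : HasDerivAt (fun w ↦ (w - x) * (w - y)) (w - x + (w - y)) w := by
    simpa [add_comm] using ((hasDerivAt_id w).sub_const x).fun_mul ((hasDerivAt_id w).sub_const y)
  have hpow : HasDerivAt (fun w ↦ (w - y) ^ (n + 1)) ((n + 1) * (w - y) ^ n) w := by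
    simpa using ((hasDerivAt_id w).sub_const y).fun_pow (n + 1)
  have hcomp : HasDerivAt (fun w ↦ α ((w - x) * (w - y)))
      (deriv α ((w - x) * (w - y)) * (w - x + (w - y))) w := hα.hasDerivAt.comp w hquad
  rw [(hcomp.fun_div hpow (pow_ne_zero _ hwy)).deriv]
  field_simp
  ring

variable [CompleteSpace 𝕜]

/- Integration by parts: the derivative of `α ((w - x) * (w - y)) / (w - y) ^ (n + 1)` has two
terms, and the second one is brought to order `n + 1` by `iteratedDeriv_sub_mul_self`. -/
lemma iteratedDeriv_comp_quadratic_mul_deriv_succ (hxy : x ≠ y) (hα : AnalyticAt 𝕜 α 0) (n : ℕ) :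
    iteratedDeriv (n + 1)
        (fun w ↦ α ((w - x) * (w - y)) * (w - x + (w - y)) / (w - y) ^ (n + 2)) x =
      iteratedDeriv n
        (fun w ↦ deriv α ((w - x) * (w - y)) * (w - x + (w - y)) / (w - y) ^ (n + 1)) x := by
  set k : 𝕜 → 𝕜 := fun w ↦ α ((w - x) * (w - y)) / (w - y) ^ (n + 1) with hk
  set l : 𝕜 → 𝕜 := fun w ↦ α ((w - x) * (w - y)) / (w - y) ^ (n + 2) with hl
  have hQ : (x - x) * (x - y) = 0 := by simp
  have hka : ContDiffAt 𝕜 (n + 1 : ℕ) k x :=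
    contDiffAt_div_sub_pow hxy (analyticAt_comp_quadratic hα hQ).contDiffAt _
  have hla : ∀ m : ℕ, ContDiffAt 𝕜 m l x := fun m ↦
    contDiffAt_div_sub_pow hxy (analyticAt_comp_quadratic hα hQ).contDiffAt _
  have hda : ContDiffAt 𝕜 n
      (fun w ↦ deriv α ((w - x) * (w - y)) * (w - x + (w - y)) / (w - y) ^ (n + 1)) x :=
    contDiffAt_div_sub_pow hxy
      ((analyticAt_comp_quadratic hα.deriv hQ).contDiffAt.mul (by fun_prop)) _
  have hsplit : (fun w ↦ α ((w - x) * (w - y)) * (w - x + (w - y)) / (w - y) ^ (n + 2)) =ᶠ[𝓝 x]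
      fun w ↦ (w - x) * l w + k w := by
    filter_upwards [eventually_ne_nhds hxy] with w hw
    simp only [hk, hl]
    field_simp
    ring
  have hderiv : deriv k =ᶠ[𝓝 x] fun w ↦
      deriv α ((w - x) * (w - y)) * (w - x + (w - y)) / (w - y) ^ (n + 1) + -(n + 1) * l w := by
    have hα' : ∀ᶠ w in 𝓝 x, DifferentiableAt 𝕜 α ((w - x) * (w - y)) :=
      (show ContinuousAt (fun w ↦ (w - x) * (w - y)) x by fun_prop).eventually
        (by simpa using hα.eventually_analyticAt.mono fun _ h ↦ h.differentiableAt)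
    filter_upwards [eventually_ne_nhds hxy, hα'] with w hw hαw
    rw [deriv_comp_quadratic_div_sub_pow hw hαw, neg_mul, ← sub_eq_add_neg]
  rw [hsplit.iteratedDeriv_eq, iteratedDeriv_fun_add (by fun_prop) hka,
    iteratedDeriv_sub_mul_self (hla _), iteratedDeriv_succ' (f := k), hderiv.iteratedDeriv_eq,
    iteratedDeriv_fun_add hda (by fun_prop), iteratedDeriv_const_mul_field]
  ring

lemma iteratedDeriv_comp_quadratic_mul_deriv (hxy : x ≠ y) (hα : AnalyticAt 𝕜 α 0) (n : ℕ) :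
    iteratedDeriv n
      (fun w ↦ α ((w - x) * (w - y)) * (w - x + (w - y)) / (w - y) ^ (n + 1)) x =
      iteratedDeriv n α 0 := by
  induction n generalizing α with
  | zero => simp [sub_ne_zero.2 hxy]
  | succ n ih =>
    rw [iteratedDeriv_comp_quadratic_mul_deriv_succ hxy hα, ih hα.deriv, iteratedDeriv_succ']

lemma poleResidue_comp_quadratic_mul_deriv (hxy : x ≠ y) (hα : AnalyticAt 𝕜 α 0) (n : ℕ) :
    poleResidue (fun w ↦ α ((w - x) * (w - y)) * (w - x + (w - y))) x y n =
      iteratedDeriv n α 0 / n ! := by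
  rw [poleResidue, iteratedDeriv_comp_quadratic_mul_deriv hxy hα]

lemma residueSum_comp_quadratic_mul_deriv (hxy : x ≠ y) (hα : AnalyticAt 𝕜 α 0) (n : ℕ) :
    residueSum (fun w ↦ α ((w - x) * (w - y)) * (w - x + (w - y))) x y n =
      2 * (iteratedDeriv n α 0 / n !) := by
  have hyx := poleResidue_comp_quadratic_mul_deriv hxy.symm hα n
  simp only [mul_comm (_ - y), add_comm (_ - y)] at hyx
  rw [residueSum, poleResidue_comp_quadratic_mul_deriv hxy hα, hyx, two_mul]

lemma residueSum_comp_quadratic_mul_self_add [CharZero 𝕜] (hxy : x ≠ y)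
    (hα : AnalyticAt 𝕜 α 0) (hβ : AnalyticAt 𝕜 β 0) (n : ℕ) :
    residueSum (fun w ↦ α ((w - x) * (w - y)) * w + β ((w - x) * (w - y))) x y n =
      iteratedDeriv n α 0 / n ! := by
  have hQx : (x - x) * (x - y) = 0 := by simp
  have hQy : (y - x) * (y - y) = 0 := by simp
  have hsymm : ∀ w, (x + y - w - x) * (x + y - w - y) = (w - x) * (w - y) := fun w ↦ by ring
  rw [residueSum_mul_self_add_of_symmetric hxy
    (analyticAt_comp_quadratic hα hQx).contDiffAt (analyticAt_comp_quadratic hα hQy).contDiffAt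
    (analyticAt_comp_quadratic hβ hQx).contDiffAt (analyticAt_comp_quadratic hβ hQy).contDiffAt
    (fun w ↦ by rw [hsymm]) (fun w ↦ by rw [hsymm]), residueSum_comp_quadratic_mul_deriv hxy hα,
    inv_mul_cancel_left₀ two_ne_zero]

end ChangeOfVariable

section TwoPointCoeff

variable {f : ℂ → ℂ} {z1 z2 : ℂ} {n : ℕ}

lemma sub_mul_twoPointCoeff_zero (f : ℂ → ℂ) (h12 : z1 ≠ z2) :
    (z2 - z1) * twoPointCoeff f z1 z2 0 = residueSum (fun w ↦ (w - z1) * f w) z1 z2 0 := by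
  have hne : z2 - z1 ≠ 0 := sub_ne_zero.2 h12.symm
  simp [twoPointCoeff, residueSum, poleResidue, mul_div_cancel₀, mul_div_cancel_left₀, hne]

lemma sub_mul_twoPointCoeff_summand_left (h12 : z1 ≠ z2) (n k : ℕ) (d : ℂ) :
    (z2 - z1) * (((n + 1 + k)! / ((k + 1)! * (n - k)!) : ℂ) *
      ((-1) ^ (k + 1) * (k + 1 : ℕ) * d / ((n + 1)! * (z1 - z2) ^ (n + 1 + (k + 1) + 1)))) =
      ((n + 1 + k)! / (k ! * (n - k)! * (n + 1)!) : ℂ) *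
        ((-1) ^ k * d / (z1 - z2) ^ (n + 2 + k)) := by
  have hk : (k + 1 : ℂ) ≠ 0 := k.cast_add_one_ne_zero
  rw [Nat.factorial_succ k, show n + 1 + (k + 1) + 1 = n + 2 + k + 1 by ring, ← neg_sub z1 z2]
  push_cast
  field_simp
  ring

lemma sub_mul_twoPointCoeff_summand_right (h12 : z1 ≠ z2) (n k : ℕ) (d : ℂ) :
    (z2 - z1) * (((n + k)! / (k ! * (n + 1 - k)!) : ℂ) *
      ((-1) ^ (n + 1 + 1) * (n + 1 : ℕ) * d / ((n + 1)! * (z1 - z2) ^ (n + 1 + k + 1)))) =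
      ((n + k)! / (k ! * (n + 1 - k)! * n !) : ℂ) *
        ((-1) ^ k * d / (z2 - z1) ^ (n + 1 + k)) := by
  have hne : z2 - z1 ≠ 0 := sub_ne_zero.2 h12.symm
  have hn : (n + 1 : ℂ) ≠ 0 := n.cast_add_one_ne_zero
  have hneg : (z1 - z2) ^ (n + 1 + k + 1) =
      (-1) ^ (n + 1 + 1) * (-1) ^ k * ((z2 - z1) * (z2 - z1) ^ (n + 1 + k)) := by
    rw [← pow_succ', ← pow_add, ← neg_sub z2 z1, neg_pow]
    ring
  have hsq : ((-1 : ℂ) ^ k) ^ 2 = 1 := by rw [← pow_mul, mul_comm, pow_mul, neg_one_sq, one_pow]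
  rw [hneg, Nat.factorial_succ n]
  push_cast
  field_simp
  rw [hsq, mul_one]

lemma sub_mul_twoPointCoeff_succ (f : ℂ → ℂ) (h12 : z1 ≠ z2) (n : ℕ) :
    (z2 - z1) * twoPointCoeff f z1 z2 (n + 1) =
      (∑ k ∈ range (n + 1), ((n + 1 + k)! / (k ! * (n - k)! * (n + 1)!) : ℂ) *
        ((-1) ^ k * iteratedDeriv (n - k) f z1 / (z1 - z2) ^ (n + 2 + k))) +
      ∑ k ∈ range (n + 2), ((n + k)! / (k ! * (n + 1 - k)! * n !) : ℂ) *
        ((-1) ^ k * iteratedDeriv (n + 1 - k) f z2 / (z2 - z1) ^ (n + 1 + k)) := by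
  rw [twoPointCoeff, if_neg n.succ_ne_zero, mul_sum]
  simp only [mul_add, add_div, sum_add_distrib]
  rw [add_comm]
  congr 1
  · rw [sum_range_succ']
    simp [← sub_mul_twoPointCoeff_summand_left h12]
  · refine sum_congr rfl fun k _ ↦ ?_
    rw [← sub_mul_twoPointCoeff_summand_right h12, Nat.add_right_comm, Nat.add_sub_cancel]

lemma sub_mul_twoPointCoeff (h12 : z1 ≠ z2) (hf1 : ContDiffAt ℂ n f z1)
    (hf2 : ContDiffAt ℂ n f z2) :
    (z2 - z1) * twoPointCoeff f z1 z2 n = residueSum (fun w ↦ (w - z1) * f w) z1 z2 n := by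
  cases n with
  | zero => exact sub_mul_twoPointCoeff_zero f h12
  | succ n =>
    rw [sub_mul_twoPointCoeff_succ f h12, residueSum, poleResidue_sub_mul_self h12 hf1,
      poleResidue_sub_mul_other h12.symm,
      iteratedDeriv_inv_sub_pow_succ_mul_div_factorial h12
        (hf1.of_le (mod_cast n.le_succ)) (n + 1),
      iteratedDeriv_inv_sub_pow_succ_mul_div_factorial h12.symm hf2]

variable {A B : ℂ → ℂ}

lemma sub_mul_twoPointCoeff_comp_quadratic (h12 : z1 ≠ z2)
    (hA : AnalyticAt ℂ A 0) (hB : AnalyticAt ℂ B 0) (n : ℕ) :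
    (z2 - z1) *
        twoPointCoeff (fun w ↦ A ((w - z1) * (w - z2)) + w * B ((w - z1) * (w - z2))) z1 z2 n =
      (iteratedDeriv n A 0 + z2 * iteratedDeriv n B 0) / n ! := by
  have hcont : ∀ {u}, (u - z1) * (u - z2) = 0 →
      ContDiffAt ℂ n (fun w ↦ A ((w - z1) * (w - z2)) + w * B ((w - z1) * (w - z2))) u :=
    fun hu ↦ ((analyticAt_comp_quadratic hA hu).fun_add
      (analyticAt_id.fun_mul (analyticAt_comp_quadratic hB hu))).contDiffAt
  have hB' : ContDiffAt ℂ n B 0 := hB.contDiffAt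
  have hres := residueSum_comp_quadratic_mul_self_add (α := fun q ↦ A q + z2 * B q)
    (β := fun q ↦ -z1 * A q + (q - z1 * z2) * B q) h12 (by fun_prop) (by fun_prop) n
  rw [iteratedDeriv_fun_add hA.contDiffAt (by fun_prop), iteratedDeriv_const_mul_field] at hres
  rw [sub_mul_twoPointCoeff h12 (hcont (by simp)) (hcont (by simp)), ← hres]
  congr 1
  funext w
  ring

lemma sub_mul_twoPointCoeff_swap_comp_quadratic (h12 : z1 ≠ z2)
    (hA : AnalyticAt ℂ A 0) (hB : AnalyticAt ℂ B 0) (n : ℕ) :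
    (z1 - z2) *
        twoPointCoeff (fun w ↦ A ((w - z1) * (w - z2)) + w * B ((w - z1) * (w - z2))) z2 z1 n =
      (iteratedDeriv n A 0 + z1 * iteratedDeriv n B 0) / n ! := by
  simpa only [mul_comm (_ - z2)] using sub_mul_twoPointCoeff_comp_quadratic h12.symm hA hB n

lemma neg_mul_twoPointCoeff_sub_comp_quadratic (h12 : z1 ≠ z2)
    (hA : AnalyticAt ℂ A 0) (hB : AnalyticAt ℂ B 0) (n : ℕ) :
    -z1 * twoPointCoeff (fun w ↦ A ((w - z1) * (w - z2)) + w * B ((w - z1) * (w - z2))) z1 z2 n -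
        z2 * twoPointCoeff (fun w ↦ A ((w - z1) * (w - z2)) + w * B ((w - z1) * (w - z2))) z2 z1 n =
      iteratedDeriv n A 0 / n ! := by
  apply mul_left_cancel₀ (sub_ne_zero.2 h12.symm)
  linear_combination -z1 * sub_mul_twoPointCoeff_comp_quadratic h12 hA hB n +
    z2 * sub_mul_twoPointCoeff_swap_comp_quadratic h12 hA hB n

lemma twoPointCoeff_add_swap_comp_quadratic (h12 : z1 ≠ z2)
    (hA : AnalyticAt ℂ A 0) (hB : AnalyticAt ℂ B 0) (n : ℕ) :
    twoPointCoeff (fun w ↦ A ((w - z1) * (w - z2)) + w * B ((w - z1) * (w - z2))) z1 z2 n +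
        twoPointCoeff (fun w ↦ A ((w - z1) * (w - z2)) + w * B ((w - z1) * (w - z2))) z2 z1 n =
      iteratedDeriv n B 0 / n ! := by
  apply mul_left_cancel₀ (sub_ne_zero.2 h12.symm)
  linear_combination sub_mul_twoPointCoeff_comp_quadratic h12 hA hB n -
    sub_mul_twoPointCoeff_swap_comp_quadratic h12 hA hB n

end TwoPointCoeff

section Decomposition

lemma even_comp_cpow_two_inv {X : Type*} {h : ℂ → X} (hh : Function.Even h) {v q : ℂ}
    (hv : v ^ 2 = q) :
    h (q ^ (2⁻¹ : ℂ)) = h v := by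
  rcases sq_eq_sq_iff_eq_or_eq_neg.1 ((Complex.cpow_ofNat_inv_pow q 2).trans hv.symm) with hq | hq
  · rw [hq]
  · rw [hq, hh]

lemma even_dslope_zero_of_odd {𝕜 X : Type*} [NontriviallyNormedField 𝕜] [NormedAddCommGroup X]
    [NormedSpace 𝕜 X] [IsAddTorsionFree X] {h : 𝕜 → X} (hh : Function.Odd h) :
    Function.Even (dslope h 0) := by
  intro v
  rcases eq_or_ne v 0 with rfl | hv
  · rw [neg_zero]
  · rw [dslope_of_ne _ (neg_ne_zero.2 hv), dslope_of_ne _ hv, slope_def_module, slope_def_module,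
      hh, hh.map_zero]
    simp

variable {E : Type*} [NormedAddCommGroup E] [NormedSpace ℂ E] {U : Set ℂ} {f h : ℂ → E}

/- Away from the cut of the principal square root, so near any `q₀ ≠ 0` after rescaling by `q₀`, the
square root is holomorphic; evenness makes the choice of branch irrelevant. -/
lemma differentiableAt_even_comp_cpow_two_inv (hh : Function.Even h) {q₀ : ℂ} (hq₀ : q₀ ≠ 0)
    (hd : DifferentiableAt ℂ h (q₀ ^ (2⁻¹ : ℂ))) :
    DifferentiableAt ℂ (fun q ↦ h (q ^ (2⁻¹ : ℂ))) q₀ := by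
  set σ : ℂ → ℂ := fun q ↦ q₀ ^ (2⁻¹ : ℂ) * (q / q₀) ^ (2⁻¹ : ℂ) with hσ
  have hσ_sq : ∀ q, σ q ^ 2 = q := fun q ↦ by
    simp only [hσ, mul_pow, Complex.cpow_ofNat_inv_pow, mul_div_cancel₀ q hq₀]
  have hσ_diff : DifferentiableAt ℂ σ q₀ :=
    (DifferentiableAt.cpow_const (by fun_prop) (by simp [div_self hq₀])).const_mul _
  have hbranch : (fun q ↦ h (q ^ (2⁻¹ : ℂ))) = h ∘ σ :=
    funext fun q ↦ even_comp_cpow_two_inv hh (hσ_sq q)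
  rw [hbranch]
  exact DifferentiableAt.comp q₀ (by simpa [hσ, div_self hq₀] using hd) hσ_diff

lemma exists_differentiableOn_comp_sq_of_even [CompleteSpace E] (hU : IsOpen U)
    (hh : Function.Even h) (hd : DifferentiableOn ℂ h ((· ^ 2) ⁻¹' U)) :
    ∃ H : ℂ → E, DifferentiableOn ℂ H U ∧ ∀ v, h v = H (v ^ 2) := by
  have hd' : ∀ q ∈ U, DifferentiableAt ℂ h (q ^ (2⁻¹ : ℂ)) := fun q hq ↦
    hd.differentiableAt ((hU.preimage (continuous_pow 2)).mem_nhds (by simpa using hq))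
  have hne : ∀ q ∈ U, q ≠ 0 → DifferentiableAt ℂ (fun q ↦ h (q ^ (2⁻¹ : ℂ))) q :=
    fun q hq hq₀ ↦ differentiableAt_even_comp_cpow_two_inv hh hq₀ (hd' q hq)
  refine ⟨fun q ↦ h (q ^ (2⁻¹ : ℂ)), fun q hq ↦ DifferentiableAt.differentiableWithinAt ?_,
    fun v ↦ (even_comp_cpow_two_inv hh rfl).symm⟩
  rcases eq_or_ne q 0 with rfl | hq₀
  · have hcont : ContinuousAt (fun q : ℂ ↦ h (q ^ (2⁻¹ : ℂ))) 0 :=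
      ContinuousAt.comp (f := fun q : ℂ ↦ q ^ (2⁻¹ : ℂ)) (hd' 0 hq).continuousAt
        (Complex.continuousAt_cpow_const_of_re_pos (by simp) (by norm_num))
    have hpunctured : ∀ᶠ q in 𝓝[≠] 0, DifferentiableAt ℂ (fun q ↦ h (q ^ (2⁻¹ : ℂ))) q := by
      filter_upwards [self_mem_nhdsWithin, mem_nhdsWithin_of_mem_nhds (hU.mem_nhds hq)]
        with q hq₀ hqU using hne q hqU hq₀
    exact (Complex.analyticAt_of_differentiable_on_punctured_nhds_of_continuousAt
      hpunctured hcont).differentiableAt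
  · exact hne q hq hq₀

lemma exists_differentiableOn_smul_comp_sq_of_odd [CompleteSpace E] (hU : IsOpen U)
    (hh : Function.Odd h) (hd : DifferentiableOn ℂ h ((· ^ 2) ⁻¹' U)) :
    ∃ H : ℂ → E, DifferentiableOn ℂ H U ∧ ∀ v, h v = v • H (v ^ 2) := by
  have : IsAddTorsionFree E := .of_isTorsionFree ℂ E
  have hopen : IsOpen ((· ^ 2) ⁻¹' U : Set ℂ) := hU.preimage (continuous_pow 2)
  have hdslope : DifferentiableOn ℂ (dslope h 0) ((· ^ 2) ⁻¹' U) := by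
    by_cases h0 : (0 : ℂ) ∈ (· ^ 2) ⁻¹' U
    · exact (Complex.differentiableOn_dslope (hopen.mem_nhds h0)).2 hd
    · exact (differentiableOn_dslope_of_notMem h0).2 hd
  obtain ⟨H, hH, hhH⟩ :=
    exists_differentiableOn_comp_sq_of_even hU (even_dslope_zero_of_odd hh) hdslope
  refine ⟨H, hH, fun v ↦ ?_⟩
  rw [← hhH]
  simpa [hh.map_zero] using (sub_smul_dslope h 0 v).symm

lemma exists_differentiableOn_comp_sq_add_smul [CompleteSpace E] (hU : IsOpen U)
    (hd : DifferentiableOn ℂ h ((· ^ 2) ⁻¹' U)) :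
    ∃ H K : ℂ → E, DifferentiableOn ℂ H U ∧ DifferentiableOn ℂ K U ∧
      ∀ v, h v = H (v ^ 2) + v • K (v ^ 2) := by
  have hdneg : DifferentiableOn ℂ (fun v ↦ h (-v)) ((· ^ 2) ⁻¹' U) :=
    hd.comp (differentiableOn_neg _) fun v hv ↦ by simpa using hv
  obtain ⟨H, hH, hHeven⟩ := exists_differentiableOn_comp_sq_of_even hU
    (h := fun v ↦ (2⁻¹ : ℂ) • (h v + h (-v))) (fun v ↦ by simp only [neg_neg, add_comm])
    ((hd.fun_add hdneg).const_smul _)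
  obtain ⟨K, hK, hKodd⟩ := exists_differentiableOn_smul_comp_sq_of_odd hU
    (h := fun v ↦ (2⁻¹ : ℂ) • (h v - h (-v)))
    (fun v ↦ by simp only [neg_neg, ← smul_neg, neg_sub]) ((hd.fun_sub hdneg).const_smul _)
  refine ⟨H, K, hH, hK, fun v ↦ ?_⟩
  rw [← hHeven, ← hKodd]
  module

lemma exists_differentiableOn_comp_quadratic_add_smul [CompleteSpace E] (hU : IsOpen U) (a b : ℂ)
    (hf : DifferentiableOn ℂ f {w | (w - a) * (w - b) ∈ U}) :
    ∃ A B : ℂ → E, DifferentiableOn ℂ A U ∧ DifferentiableOn ℂ B U ∧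
      ∀ w, f w = A ((w - a) * (w - b)) + w • B ((w - a) * (w - b)) := by
  set c : ℂ := (a + b) / 2 with hc
  set δ : ℂ := ((a - b) / 2) ^ 2 with hδ
  have hsq : ∀ w, (w - a) * (w - b) = (w - c) ^ 2 - δ := fun w ↦ by rw [hc, hδ]; ring
  have hshift : ∀ {G : ℂ → E}, DifferentiableOn ℂ G ((· - δ) ⁻¹' U) →
      DifferentiableOn ℂ (fun q ↦ G (q + δ)) U := fun hG ↦
    hG.comp (by fun_prop) fun q hq ↦ by simpa using hq
  obtain ⟨H, K, hH, hK, hfHK⟩ := exists_differentiableOn_comp_sq_add_smul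
    (h := fun v ↦ f (v + c)) (hU.preimage (continuous_sub_right δ))
    (hf.comp (by fun_prop) fun v hv ↦ by simpa [hsq] using hv)
  refine ⟨fun q ↦ H (q + δ) - c • K (q + δ), fun q ↦ K (q + δ),
    (hshift hH).fun_sub ((hshift hK).const_smul c), hshift hK, fun w ↦ ?_⟩
  have hfw := hfHK (w - c)
  rw [sub_add_cancel] at hfw
  simp only [hsq, sub_add_cancel, hfw]
  module

end Decomposition

theorem twoPointTaylor_alternative_form_tendsto_general {f : ℂ → ℂ} {z1 z2 : ℂ} (h12 : z1 ≠ z2)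
    {r : ℝ} (hf : DifferentiableOn ℂ f {w | ‖(w - z1) * (w - z2)‖ < r}) {z : ℂ}
    (hz : ‖(z - z1) * (z - z2)‖ < r) :
    HasSum (fun n ↦ (-z1 * twoPointCoeff f z1 z2 n - z2 * twoPointCoeff f z2 z1 n +
      (twoPointCoeff f z1 z2 n + twoPointCoeff f z2 z1 n) * z) * ((z - z1) * (z - z2)) ^ n)
      (f z) := by
  have hball : {w | ‖(w - z1) * (w - z2)‖ < r} = {w | (w - z1) * (w - z2) ∈ Metric.ball 0 r} := by
    simp only [mem_ball_zero_iff]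
  obtain ⟨A, B, hA, hB, hfAB⟩ :=
    exists_differentiableOn_comp_quadratic_add_smul Metric.isOpen_ball z1 z2 (hball ▸ hf)
  have hzball : (z - z1) * (z - z2) ∈ Metric.ball 0 r := mem_ball_zero_iff.2 hz
  have hr : Metric.ball (0 : ℂ) r ∈ 𝓝 0 := Metric.ball_mem_nhds 0 ((norm_nonneg _).trans_lt hz)
  have hAsum := Complex.hasSum_taylorSeries_on_ball hA hzball
  have hBsum := Complex.hasSum_taylorSeries_on_ball hB hzball
  obtain rfl : f = fun w ↦ A ((w - z1) * (w - z2)) + w * B ((w - z1) * (w - z2)) := funext hfAB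
  refine (hAsum.add (hBsum.mul_left z)).congr_fun fun n ↦ ?_
  rw [neg_mul_twoPointCoeff_sub_comp_quadratic h12 (hA.analyticAt hr) (hB.analyticAt hr),
    twoPointCoeff_add_swap_comp_quadratic h12 (hA.analyticAt hr) (hB.analyticAt hr)]
  simp only [smul_eq_mul, sub_zero]
  ring

/-- Alternative form of the two-point Taylor expansion, with
`A_n = −z1·a_n(z1,z2) − z2·a_n(z2,z1)` and `B_n = a_n(z1,z2) + a_n(z2,z1)`. -/
theorem twoPointTaylor_alternative_form_tendsto
    (Ω : Set ℂ) (hΩ : IsOpen Ω) (f : ℂ → ℂ) (hf : DifferentiableOn ℂ f Ω)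
    (z1 z2 : ℂ) (hz1 : z1 ∈ Ω) (hz2 : z2 ∈ Ω) (h12 : z1 ≠ z2)
    (z : ℂ) (hz : z ∈ Ω)
    (r : ℝ) (hr : ‖(z - z1) * (z - z2)‖ < r)
    (hrΩ : ∀ w : ℂ, w ∉ Ω → r ≤ ‖(w - z1) * (w - z2)‖)
    (A B : ℕ → ℂ)
    (hA : ∀ n, A n = -z1 * twoPointCoeff f z1 z2 n - z2 * twoPointCoeff f z2 z1 n)
    (hB : ∀ n, B n = twoPointCoeff f z1 z2 n + twoPointCoeff f z2 z1 n) :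
    Filter.Tendsto
      (fun N : ℕ => ∑ n ∈ Finset.range N,
        (A n + B n * z) * ((z - z1) * (z - z2)) ^ n)
      Filter.atTop (nhds (f z)) := by
  have hsub : {w | ‖(w - z1) * (w - z2)‖ < r} ⊆ Ω := fun w hw ↦ by_contra fun hwΩ ↦
    (hrΩ w hwΩ).not_gt hw
  simpa only [hA, hB] using
    (twoPointTaylor_alternative_form_tendsto_general h12 (hf.mono hsub) hr).tendsto_sum_nat
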